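/- arXiv:0812.0217 — 2 statements merged into one kernel-verified Lean document; each statement's English description precedes it below -/
import Mathlib

section
/- Let a ∈ ℝ. On U = {(u,φ,p_u,p_φ) ∈ ℝ⁴ : 0 < u < 1}, let P be the constant matrix with P₁₃ = P₂₄ = 1, P₃₁ = P₄₂ = −1 and other entries 0, and let Π′ be the antisymmetric complex matrix with upper entries Π′₁₂ = u^{1/3}, Π′₁₃ = i·u^{1/3}·p_u − u^{4/3}·p_φ/(1−u²), Π′₁₄ = 0, Π′₂₃ = (1−4u²)·p_u/(3u^{2/3}(1−u²)) + i·u^{1/3}(4−u²)·p_φ/(3(1−u²)²), Π′₂₄ = 0, Π′₃₄ = i·a·e^{iφ}/(2u^{1/3}√(1−u²)). Then P and Π′ are compatible: for all λ, μ ∈ ℂ the matrix λP + μΠ′ satisfies the Jacobi condition Σ_l (Π_{li}∂_lΠ_{jk} + Π_{lj}∂_lΠ_{ki} + Π_{lk}∂_lΠ_{ij}) = 0 on U for all i,j,k. -/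
open Complex

/-- Partial derivative of a ℂ-valued function on ℝ⁴ in the `i`-th coordinate. -/
noncomputable def pdC (i : Fin 4) (f : (Fin 4 → ℝ) → ℂ) (z : Fin 4 → ℝ) : ℂ :=
  fderiv ℝ f z (Pi.single i 1)

/-- The second (complex) Poisson matrix Π′ of the Goryachev system on T*S²,
in coordinates z = (u, φ, p_u, p_φ); it is P′_{μν} at μ = 0, ν = −a². -/
noncomputable def GorP (a : ℝ) (z : Fin 4 → ℝ) : Matrix (Fin 4) (Fin 4) ℂ :=
  let e12 : ℂ := ((z 0 ^ ((1 : ℝ) / 3) : ℝ) : ℂ)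
  let e13 : ℂ := Complex.I * ((z 0 ^ ((1 : ℝ) / 3) * z 2 : ℝ) : ℂ)
    - ((z 0 ^ ((4 : ℝ) / 3) * z 3 / (1 - (z 0) ^ 2) : ℝ) : ℂ)
  let e23 : ℂ := (((1 - 4 * (z 0) ^ 2) * z 2 / (3 * z 0 ^ ((2 : ℝ) / 3) * (1 - (z 0) ^ 2)) : ℝ) : ℂ)
    + Complex.I * ((z 0 ^ ((1 : ℝ) / 3) * (4 - (z 0) ^ 2) * z 3 / (3 * (1 - (z 0) ^ 2) ^ 2) : ℝ) : ℂ)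
  let e34 : ℂ := Complex.I * (a : ℂ) * Complex.exp (Complex.I * ((z 1 : ℝ) : ℂ))
    / ((2 * z 0 ^ ((1 : ℝ) / 3) * Real.sqrt (1 - (z 0) ^ 2) : ℝ) : ℂ)
  !![0, e12, e13, 0;
     -e12, 0, e23, 0;
     -e13, -e23, 0, e34;
     0, 0, -e34, 0]

/-- The canonical Poisson matrix P on ℝ⁴, as a complex matrix. -/
noncomputable def canPC : Matrix (Fin 4) (Fin 4) ℂ :=
  !![0, 0, 1, 0;
     0, 0, 0, 1;
     -1, 0, 0, 0;
     0, -1, 0, 0]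

/-!
The Jacobiator is quadratic in the bivector and `P` is constant, so the Jacobiator of `λP + μΠ′` is
`λμ [P, Π′] + μ² [Π′, Π′] / 2`, where both Schouten brackets are alternating in their three indices.
The entries of `Π′` are affine in the momenta or proportional to `exp (iφ)`, with coefficients
depending on `u` alone, so the vanishing of the brackets is a system of ordinary differential
equations in `u`. In the notation of `BivectorCoeffs.bivector`, `[P, Π′] = 0` is `dα/du = β + γ`,
and `[Π′, Π′] = 0` adds one equation for `dβ/du` and one for `dκ/du`.
-/

/-- The half of the Schouten bracket of two bivectors in which only `B` is differentiated. It is the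
Jacobiator of `B` for `A = B z`, and the full Schouten bracket when `A` is the value of a constant
bivector; only the value of the first bivector at `z` enters, so `A` is a single matrix. -/
noncomputable def halfSchouten (A : Matrix (Fin 4) (Fin 4) ℂ)
    (B : (Fin 4 → ℝ) → Matrix (Fin 4) (Fin 4) ℂ) (z : Fin 4 → ℝ) (i j k : Fin 4) : ℂ :=
  ∑ l, (A l i * pdC l (fun w => B w j k) z + A l j * pdC l (fun w => B w k i) z
    + A l k * pdC l (fun w => B w i j) z)

lemma eq_zero_of_cyclic_of_swap {ι M : Type*} [LinearOrder ι] [AddGroup M] [IsAddTorsionFree M]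
    {J : ι → ι → ι → M} (hcycle : ∀ i j k, J i j k = J j k i)
    (hswap : ∀ i j k, J i j k = -J j i k) (hlt : ∀ i j k, i < j → j < k → J i j k = 0)
    (i j k : ι) : J i j k = 0 := by
  have hdiag (i k) : J i i k = 0 := self_eq_neg.mp (hswap i i k)
  have hmin (i j k) (hij : i < j) (hik : i < k) : J i j k = 0 := by
    rcases lt_trichotomy j k with hjk | rfl | hkj
    · exact hlt i j k hij hjk
    · rw [hcycle, hdiag]
    · rw [hswap, hcycle, hlt i k j hik hkj, neg_zero]
  rcases lt_trichotomy i j with hij | rfl | hji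
  · rcases lt_trichotomy i k with hik | rfl | hki
    · exact hmin i j k hij hik
    · rw [hcycle, hcycle, hdiag]
    · rw [hcycle, hcycle, hmin k i j hki (hki.trans hij)]
  · exact hdiag i k
  · rcases lt_trichotomy j k with hjk | rfl | hkj
    · rw [hcycle, hmin j k i hjk hji]
    · rw [hcycle, hdiag]
    · rw [hcycle, hcycle, hmin k i j (hkj.trans hji) hkj]

lemma hasFDerivAt_comp_coord {ι E : Type*} [Finite ι] [NormedAddCommGroup E] [NormedSpace ℝ E]
    {f : ℝ → E} {f' : E} {z : ι → ℝ} {i : ι} (hf : HasDerivAt f f' (z i)) :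
    HasFDerivAt (fun w : ι → ℝ => f (w i))
      ((ContinuousLinearMap.toSpanSingleton ℝ f').comp
        (ContinuousLinearMap.proj (R := ℝ) (φ := fun _ : ι => ℝ) i)) z :=
  have := Fintype.ofFinite ι
  hf.hasFDerivAt.comp z (hasFDerivAt_apply i z)

section PartialDerivatives

variable {z : Fin 4 → ℝ} {f g : ℝ → ℂ} {f' g' : ℂ}

lemma pdC_const_add_const_mul (l : Fin 4) (c m : ℂ) (F : (Fin 4 → ℝ) → ℂ) (z : Fin 4 → ℝ) :
    pdC l (fun w => c + m * F w) z = m * pdC l F z := by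
  have hsmul : fderiv ℝ (fun w => m * F w) = m • fderiv ℝ F := fderiv_const_smul_field m
  simp [pdC, hsmul]

lemma pdC_neg (l : Fin 4) (F : (Fin 4 → ℝ) → ℂ) (z : Fin 4 → ℝ) :
    pdC l (fun w => -F w) z = -pdC l F z := by
  simp [pdC, fderiv_fun_neg]

lemma pdC_comp_coord {i : Fin 4} (hf : HasDerivAt f f' (z i)) (l : Fin 4) :
    pdC l (fun w => f (w i)) z = if l = i then f' else 0 := by
  rw [pdC, (hasFDerivAt_comp_coord hf).fderiv]
  simp [Pi.single_apply, eq_comm]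

lemma pdC_add {F G : (Fin 4 → ℝ) → ℂ} (hF : DifferentiableAt ℝ F z)
    (hG : DifferentiableAt ℝ G z) (l : Fin 4) :
    pdC l (fun w => F w + G w) z = pdC l F z + pdC l G z := by
  simp [pdC, fderiv_fun_add hF hG]

lemma pdC_mul {F G : (Fin 4 → ℝ) → ℂ} (hF : DifferentiableAt ℝ F z)
    (hG : DifferentiableAt ℝ G z) (l : Fin 4) :
    pdC l (fun w => F w * G w) z = F z * pdC l G z + pdC l F z * G z := by
  simp [pdC, fderiv_fun_mul hF hG, mul_comm]

lemma pdC_comp_coord_mul_comp_coord {i j : Fin 4} (hf : HasDerivAt f f' (z i))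
    (hg : HasDerivAt g g' (z j)) (l : Fin 4) :
    pdC l (fun w => f (w i) * g (w j)) z =
      f (z i) * (if l = j then g' else 0) + (if l = i then f' else 0) * g (z j) := by
  rw [pdC_mul (hasFDerivAt_comp_coord hf).differentiableAt
    (hasFDerivAt_comp_coord hg).differentiableAt, pdC_comp_coord hf, pdC_comp_coord hg]

lemma pdC_momentum_combination (hf : HasDerivAt f f' (z 0)) (hg : HasDerivAt g g' (z 0))
    (l : Fin 4) :
    pdC l (fun w => f (w 0) * w 2 + g (w 0) * w 3) z =
      ![f' * z 2 + g' * z 3, 0, f (z 0), g (z 0)] l := by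
  have hp (i : Fin 4) : HasDerivAt (fun x : ℝ => (x : ℂ)) 1 (z i) :=
    (hasDerivAt_id (z i)).ofReal_comp
  have hcoord {h : ℝ → ℂ} {h' : ℂ} {i : Fin 4} (hh : HasDerivAt h h' (z i)) :
      DifferentiableAt ℝ (fun w : Fin 4 → ℝ => h (w i)) z :=
    (hasFDerivAt_comp_coord hh).differentiableAt
  rw [pdC_add ((hcoord hf).fun_mul (hcoord (hp 2))) ((hcoord hg).fun_mul (hcoord (hp 3))),
    pdC_comp_coord_mul_comp_coord hf (hp 2), pdC_comp_coord_mul_comp_coord hg (hp 3)]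
  fin_cases l <;> simp

lemma pdC_mul_exp_angle (hf : HasDerivAt f f' (z 0)) (k : ℂ) (l : Fin 4) :
    pdC l (fun w => f (w 0) * exp (k * w 1)) z =
      ![f' * exp (k * z 1), k * (f (z 0) * exp (k * z 1)), 0, 0] l := by
  have hexp : HasDerivAt (fun x : ℝ => exp (k * x)) (exp (k * z 1) * (k * 1)) (z 1) :=
    ((hasDerivAt_id (z 1)).ofReal_comp.const_mul k).cexp
  rw [pdC_comp_coord_mul_comp_coord hf hexp]
  fin_cases l <;> simp
  ring

end PartialDerivatives

section HalfSchouten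

variable (A C : Matrix (Fin 4) (Fin 4) ℂ) {B : (Fin 4 → ℝ) → Matrix (Fin 4) (Fin 4) ℂ}
  (z : Fin 4 → ℝ)

lemma halfSchouten_cycle (i j k : Fin 4) : halfSchouten A B z i j k = halfSchouten A B z j k i :=
  Finset.sum_congr rfl fun _ _ => by ring

lemma pdC_entry_swap (hB : ∀ w i j, B w i j = -B w j i) (l i j : Fin 4) :
    pdC l (fun w => B w i j) z = -pdC l (fun w => B w j i) z := by
  simp only [← pdC_neg, ← hB]

lemma halfSchouten_swap (hB : ∀ w i j, B w i j = -B w j i) (i j k : Fin 4) :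
    halfSchouten A B z i j k = -halfSchouten A B z j i k := by
  simp only [halfSchouten, ← Finset.sum_neg_distrib]
  refine Finset.sum_congr rfl fun l _ => ?_
  rw [pdC_entry_swap z hB l j k, pdC_entry_swap z hB l k i, pdC_entry_swap z hB l i j]
  ring

lemma halfSchouten_eq_zero_of_increasing (hB : ∀ w i j, B w i j = -B w j i)
    (h012 : halfSchouten A B z 0 1 2 = 0) (h013 : halfSchouten A B z 0 1 3 = 0)
    (h023 : halfSchouten A B z 0 2 3 = 0) (h123 : halfSchouten A B z 1 2 3 = 0)
    (i j k : Fin 4) : halfSchouten A B z i j k = 0 := by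
  refine eq_zero_of_cyclic_of_swap (halfSchouten_cycle A z) (halfSchouten_swap A z hB)
    (fun i j k hij hjk => ?_) i j k
  have htriple : (i = 0 ∧ j = 1 ∧ k = 2) ∨ (i = 0 ∧ j = 1 ∧ k = 3) ∨
      (i = 0 ∧ j = 2 ∧ k = 3) ∨ (i = 1 ∧ j = 2 ∧ k = 3) := by lia
  rcases htriple with ⟨rfl, rfl, rfl⟩ | ⟨rfl, rfl, rfl⟩ | ⟨rfl, rfl, rfl⟩ | ⟨rfl, rfl, rfl⟩ <;>
    assumption

lemma halfSchouten_pencil (c m : ℂ) (i j k : Fin 4) :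
    halfSchouten (c • C + m • A) (fun w => c • C + m • B w) z i j k =
      m * (c * halfSchouten C B z i j k + m * halfSchouten A B z i j k) := by
  simp only [halfSchouten, Matrix.add_apply, Matrix.smul_apply, smul_eq_mul,
    pdC_const_add_const_mul, Finset.mul_sum, ← Finset.sum_add_distrib]
  exact Finset.sum_congr rfl fun l _ => by ring

end HalfSchouten

/-- The coefficients of the bivectors `BivectorCoeffs.bivector` on `T*S²`: functions of `u` alone,
and the constant `k` such that the potential term is proportional to `exp (k φ)`. -/
structure BivectorCoeffs where
  (α β γ ε κ : ℝ → ℂ)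
  k : ℂ

namespace BivectorCoeffs

/-- The bivector whose bracket is `{u, φ} = α`, `{u, p_u} = k α p_u - β p_φ`,
`{φ, p_u} = γ p_u + ε p_φ`, `{p_u, p_φ} = κ exp (k φ)` and `{u, p_φ} = {φ, p_φ} = 0`. -/
noncomputable def bivector (c : BivectorCoeffs) (z : Fin 4 → ℝ) : Matrix (Fin 4) (Fin 4) ℂ :=
  let b : ℂ := c.k * c.α (z 0) * z 2 + -c.β (z 0) * z 3
  let s : ℂ := c.γ (z 0) * z 2 + c.ε (z 0) * z 3
  let d : ℂ := c.κ (z 0) * exp (c.k * z 1)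
  !![0, c.α (z 0), b, 0;
     -c.α (z 0), 0, s, 0;
     -b, -s, 0, d;
     0, 0, -d, 0]

/-- The differential system at `u` that makes `c.bivector` a Poisson bivector compatible with the
canonical one. -/
structure CompatibleAt (c : BivectorCoeffs) (u : ℝ) : Prop where
  α_ne_zero : c.α u ≠ 0
  hasDerivAt_α : HasDerivAt c.α (c.β u + c.γ u) u
  hasDerivAt_β : HasDerivAt c.β (c.β u ^ 2 / c.α u - c.k * c.ε u) u
  differentiableAt_γ : DifferentiableAt ℝ c.γ u
  differentiableAt_ε : DifferentiableAt ℝ c.ε u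
  hasDerivAt_κ : HasDerivAt c.κ (-(c.γ u / c.α u) * c.κ u) u

lemma bivector_antisymm (c : BivectorCoeffs) (z : Fin 4 → ℝ) (i j : Fin 4) :
    c.bivector z i j = -c.bivector z j i := by
  fin_cases i <;> fin_cases j <;> simp [bivector]

lemma pdC_bivector_three_zero (c : BivectorCoeffs) (z : Fin 4 → ℝ) (l : Fin 4) :
    pdC l (fun w => c.bivector w 3 0) z = 0 := by
  simp [bivector, pdC]

lemma pdC_bivector_one_three (c : BivectorCoeffs) (z : Fin 4 → ℝ) (l : Fin 4) :
    pdC l (fun w => c.bivector w 1 3) z = 0 := by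
  simp [bivector, pdC]

lemma pdC_bivector_three_one (c : BivectorCoeffs) (z : Fin 4 → ℝ) (l : Fin 4) :
    pdC l (fun w => c.bivector w 3 1) z = 0 := by
  simp [bivector, pdC]

namespace CompatibleAt

variable {c : BivectorCoeffs} {z : Fin 4 → ℝ}

lemma pdC_bivector_zero_one (hc : c.CompatibleAt (z 0)) (l : Fin 4) :
    pdC l (fun w => c.bivector w 0 1) z = if l = 0 then c.β (z 0) + c.γ (z 0) else 0 :=
  pdC_comp_coord hc.hasDerivAt_α l

lemma pdC_bivector_zero_two (hc : c.CompatibleAt (z 0)) (l : Fin 4) :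
    pdC l (fun w => c.bivector w 0 2) z =
      ![c.k * (c.β (z 0) + c.γ (z 0)) * z 2
          + -(c.β (z 0) ^ 2 / c.α (z 0) - c.k * c.ε (z 0)) * z 3,
        0, c.k * c.α (z 0), -c.β (z 0)] l :=
  pdC_momentum_combination (hc.hasDerivAt_α.const_mul c.k) hc.hasDerivAt_β.neg l

lemma pdC_bivector_one_two (hc : c.CompatibleAt (z 0)) (l : Fin 4) :
    pdC l (fun w => c.bivector w 1 2) z =
      ![deriv c.γ (z 0) * z 2 + deriv c.ε (z 0) * z 3, 0, c.γ (z 0), c.ε (z 0)] l :=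
  pdC_momentum_combination hc.differentiableAt_γ.hasDerivAt hc.differentiableAt_ε.hasDerivAt l

lemma pdC_bivector_two_three (hc : c.CompatibleAt (z 0)) (l : Fin 4) :
    pdC l (fun w => c.bivector w 2 3) z =
      ![-(c.γ (z 0) / c.α (z 0)) * c.bivector z 2 3, c.k * c.bivector z 2 3, 0, 0] l :=
  (pdC_mul_exp_angle hc.hasDerivAt_κ c.k l).trans (by simp [bivector, mul_assoc])

lemma halfSchouten_bivector_zero_one_two (hc : c.CompatibleAt (z 0))
    (A : Matrix (Fin 4) (Fin 4) ℂ) :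
    halfSchouten A c.bivector z 0 1 2 =
      A 0 0 * (deriv c.γ (z 0) * z 2 + deriv c.ε (z 0) * z 3) + A 2 0 * c.γ (z 0)
        + A 3 0 * c.ε (z 0)
        - A 0 1 * (c.k * (c.β (z 0) + c.γ (z 0)) * z 2
            - (c.β (z 0) ^ 2 / c.α (z 0) - c.k * c.ε (z 0)) * z 3)
        - A 2 1 * (c.k * c.α (z 0)) + A 3 1 * c.β (z 0)
        + A 0 2 * (c.β (z 0) + c.γ (z 0)) := by
  simp only [halfSchouten, Fin.sum_univ_four, pdC_entry_swap z c.bivector_antisymm _ 2 0,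
    hc.pdC_bivector_zero_one, hc.pdC_bivector_zero_two, hc.pdC_bivector_one_two,
    Matrix.cons_val, Fin.reduceEq, ↓reduceIte]
  ring

lemma halfSchouten_bivector_zero_one_three (hc : c.CompatibleAt (z 0))
    (A : Matrix (Fin 4) (Fin 4) ℂ) :
    halfSchouten A c.bivector z 0 1 3 = A 0 3 * (c.β (z 0) + c.γ (z 0)) := by
  simp [halfSchouten, pdC_bivector_one_three, pdC_bivector_three_zero,
    hc.pdC_bivector_zero_one]

lemma halfSchouten_bivector_zero_two_three (hc : c.CompatibleAt (z 0))
    (A : Matrix (Fin 4) (Fin 4) ℂ) :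
    halfSchouten A c.bivector z 0 2 3 =
      (A 1 0 * c.k - A 0 0 * (c.γ (z 0) / c.α (z 0))) * c.bivector z 2 3
        + A 0 3 * (c.k * (c.β (z 0) + c.γ (z 0)) * z 2
            - (c.β (z 0) ^ 2 / c.α (z 0) - c.k * c.ε (z 0)) * z 3)
        + A 2 3 * (c.k * c.α (z 0)) - A 3 3 * c.β (z 0) := by
  simp only [halfSchouten, Fin.sum_univ_four, pdC_bivector_three_zero, hc.pdC_bivector_zero_two,
    hc.pdC_bivector_two_three, Matrix.cons_val]
  ring

lemma halfSchouten_bivector_one_two_three (hc : c.CompatibleAt (z 0))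
    (A : Matrix (Fin 4) (Fin 4) ℂ) :
    halfSchouten A c.bivector z 1 2 3 =
      (A 1 1 * c.k - A 0 1 * (c.γ (z 0) / c.α (z 0))) * c.bivector z 2 3
        + A 0 3 * (deriv c.γ (z 0) * z 2 + deriv c.ε (z 0) * z 3)
        + A 2 3 * c.γ (z 0) + A 3 3 * c.ε (z 0) := by
  simp only [halfSchouten, Fin.sum_univ_four, pdC_bivector_three_one, hc.pdC_bivector_one_two,
    hc.pdC_bivector_two_three, Matrix.cons_val]
  ring

theorem halfSchouten_canPC_bivector (hc : c.CompatibleAt (z 0)) (i j k : Fin 4) :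
    halfSchouten canPC c.bivector z i j k = 0 := by
  refine halfSchouten_eq_zero_of_increasing canPC z c.bivector_antisymm ?_ ?_ ?_ ?_ i j k
  · simp [hc.halfSchouten_bivector_zero_one_two, canPC]
  · simp [hc.halfSchouten_bivector_zero_one_three, canPC]
  · simp [hc.halfSchouten_bivector_zero_two_three, canPC]
  · simp [hc.halfSchouten_bivector_one_two_three, canPC]

theorem halfSchouten_bivector_self (hc : c.CompatibleAt (z 0)) (i j k : Fin 4) :
    halfSchouten (c.bivector z) c.bivector z i j k = 0 := by
  have hα := hc.α_ne_zero
  refine halfSchouten_eq_zero_of_increasing (c.bivector z) z c.bivector_antisymm ?_ ?_ ?_ ?_ i j k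
  · simp only [hc.halfSchouten_bivector_zero_one_two, bivector, Matrix.of_apply, Matrix.cons_val',
      Matrix.cons_val_fin_one, Matrix.cons_val]
    field_simp
    ring
  · simp [hc.halfSchouten_bivector_zero_one_three, bivector]
  · simp only [hc.halfSchouten_bivector_zero_two_three, bivector, Matrix.of_apply, Matrix.cons_val',
      Matrix.cons_val_fin_one, Matrix.cons_val]
    ring
  · simp only [hc.halfSchouten_bivector_one_two_three, bivector, Matrix.of_apply, Matrix.cons_val',
      Matrix.cons_val_fin_one, Matrix.cons_val]
    field_simp
    ring

end CompatibleAt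

end BivectorCoeffs

section RealPowers

variable {u : ℝ}

lemma rpow_third_pow_three (h0 : 0 ≤ u) : (u ^ ((1 : ℝ) / 3)) ^ 3 = u := by
  rw [← Real.rpow_mul_natCast h0]
  norm_num

lemma rpow_two_thirds (h0 : 0 ≤ u) : u ^ ((2 : ℝ) / 3) = (u ^ ((1 : ℝ) / 3)) ^ 2 := by
  rw [← Real.rpow_mul_natCast h0]
  norm_num

lemma rpow_four_thirds (h0 : 0 ≤ u) : u ^ ((4 : ℝ) / 3) = (u ^ ((1 : ℝ) / 3)) ^ 4 := by
  rw [← Real.rpow_mul_natCast h0]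
  norm_num

-- This derivative and the two below are written through the coefficients of `Π′`, in the form of
-- the differential system `BivectorCoeffs.CompatibleAt`.
lemma hasDerivAt_rpow_third (h0 : 0 < u) (hs : 1 - u ^ 2 ≠ 0) :
    HasDerivAt (fun x : ℝ => x ^ ((1 : ℝ) / 3))
      (u ^ ((4 : ℝ) / 3) / (1 - u ^ 2)
        + (1 - 4 * u ^ 2) / (3 * u ^ ((2 : ℝ) / 3) * (1 - u ^ 2))) u := by
  refine (Real.hasDerivAt_rpow_const (p := (1 : ℝ) / 3) (Or.inl h0.ne')).congr_deriv ?_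
  have ht : 0 < u ^ ((1 : ℝ) / 3) := Real.rpow_pos_of_pos h0 _
  have hu := rpow_third_pow_three h0.le
  rw [Real.rpow_sub_one h0.ne', rpow_two_thirds h0.le, rpow_four_thirds h0.le]
  generalize u ^ ((1 : ℝ) / 3) = t at *
  subst hu
  have hs' : 1 - t ^ 6 ≠ 0 := by simpa [← pow_mul] using hs
  field_simp
  ring

lemma hasDerivAt_one_sub_sq (u : ℝ) : HasDerivAt (fun x : ℝ => 1 - x ^ 2) (-(2 * u)) u := by
  simpa using (hasDerivAt_pow 2 u).const_sub 1

lemma hasDerivAt_rpow_four_thirds_div_one_sub_sq (h0 : 0 < u) (hs : 1 - u ^ 2 ≠ 0) :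
    HasDerivAt (fun x : ℝ => x ^ ((4 : ℝ) / 3) / (1 - x ^ 2))
      ((u ^ ((4 : ℝ) / 3) / (1 - u ^ 2)) ^ 2 / u ^ ((1 : ℝ) / 3)
        + u ^ ((1 : ℝ) / 3) * (4 - u ^ 2) / (3 * (1 - u ^ 2) ^ 2)) u := by
  refine ((Real.hasDerivAt_rpow_const (p := (4 : ℝ) / 3) (Or.inl h0.ne')).div
    (hasDerivAt_one_sub_sq u) hs).congr_deriv ?_
  have ht : 0 < u ^ ((1 : ℝ) / 3) := Real.rpow_pos_of_pos h0 _
  have hu := rpow_third_pow_three h0.le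
  rw [Real.rpow_sub_one h0.ne', rpow_four_thirds h0.le]
  generalize u ^ ((1 : ℝ) / 3) = t at *
  subst hu
  field_simp
  ring

lemma hasDerivAt_inv_rpow_third_mul_sqrt (h0 : 0 < u) (hs : 0 < 1 - u ^ 2) :
    HasDerivAt (fun x : ℝ => (2 * x ^ ((1 : ℝ) / 3) * √(1 - x ^ 2))⁻¹)
      (-((1 - 4 * u ^ 2) / (3 * u ^ ((2 : ℝ) / 3) * (1 - u ^ 2)) / u ^ ((1 : ℝ) / 3)) *
        (2 * u ^ ((1 : ℝ) / 3) * √(1 - u ^ 2))⁻¹) u := by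
  have ht : 0 < u ^ ((1 : ℝ) / 3) := Real.rpow_pos_of_pos h0 _
  have hq : 0 < √(1 - u ^ 2) := Real.sqrt_pos.mpr hs
  have hsq : √(1 - u ^ 2) ^ 2 = 1 - u ^ 2 := Real.sq_sqrt hs.le
  have hrpow := Real.hasDerivAt_rpow_const (p := (1 : ℝ) / 3) (Or.inl h0.ne')
  refine (((hrpow.const_mul 2).fun_mul ((hasDerivAt_one_sub_sq u).sqrt hs.ne')).fun_inv
    (mul_pos (mul_pos two_pos ht) hq).ne').congr_deriv ?_
  have hu := rpow_third_pow_three h0.le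
  rw [Real.rpow_sub_one h0.ne', rpow_two_thirds h0.le]
  generalize u ^ ((1 : ℝ) / 3) = t at *
  field_simp
  rw [hsq, hu]
  ring

end RealPowers

/-- The coefficients of the bivector `Π′` of the Goryachev system. -/
noncomputable def goryachevCoeffs (a : ℝ) : BivectorCoeffs where
  α u := ((u ^ ((1 : ℝ) / 3) : ℝ) : ℂ)
  β u := ((u ^ ((4 : ℝ) / 3) / (1 - u ^ 2) : ℝ) : ℂ)
  γ u := (((1 - 4 * u ^ 2) / (3 * u ^ ((2 : ℝ) / 3) * (1 - u ^ 2)) : ℝ) : ℂ)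
  ε u := I * ((u ^ ((1 : ℝ) / 3) * (4 - u ^ 2) / (3 * (1 - u ^ 2) ^ 2) : ℝ) : ℂ)
  κ u := I * a * (((2 * u ^ ((1 : ℝ) / 3) * √(1 - u ^ 2))⁻¹ : ℝ) : ℂ)
  k := I

lemma GorP_eq_bivector (a : ℝ) : GorP a = (goryachevCoeffs a).bivector := by
  ext z i j
  fin_cases i <;> fin_cases j <;>
    simp [GorP, goryachevCoeffs, BivectorCoeffs.bivector, div_eq_mul_inv] <;> ring

lemma goryachevCoeffs_compatibleAt (a : ℝ) {u : ℝ} (h0 : 0 < u) (h1 : u < 1) :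
    (goryachevCoeffs a).CompatibleAt u := by
  have hs : 0 < 1 - u ^ 2 := by nlinarith
  have ht (p : ℝ) : u ^ p ≠ 0 := (Real.rpow_pos_of_pos h0 p).ne'
  have hγ : DifferentiableAt ℝ
      (fun x : ℝ => (1 - 4 * x ^ 2) / (3 * x ^ ((2 : ℝ) / 3) * (1 - x ^ 2))) u := by
    fun_prop (disch := simp [hs.ne', ht, h0.ne'])
  have hε : DifferentiableAt ℝ
      (fun x : ℝ => x ^ ((1 : ℝ) / 3) * (4 - x ^ 2) / (3 * (1 - x ^ 2) ^ 2)) u := by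
    fun_prop (disch := simp [hs.ne', h0.ne'])
  have hα' := (hasDerivAt_rpow_third h0 hs.ne').ofReal_comp
  have hβ' := (hasDerivAt_rpow_four_thirds_div_one_sub_sq h0 hs.ne').ofReal_comp
  have hκ' := (hasDerivAt_inv_rpow_third_mul_sqrt h0 hs).ofReal_comp.const_mul (I * a)
  exact
    { α_ne_zero := ofReal_ne_zero.mpr (ht _)
      hasDerivAt_α := hα'.congr_deriv (ofReal_add _ _)
      hasDerivAt_β := hβ'.congr_deriv (by simp [goryachevCoeffs, ← mul_assoc])
      differentiableAt_γ := hγ.hasDerivAt.ofReal_comp.differentiableAt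
      differentiableAt_ε := (hε.hasDerivAt.ofReal_comp.const_mul I).differentiableAt
      hasDerivAt_κ := hκ'.congr_deriv (by
        simp only [goryachevCoeffs]
        push_cast
        ring) }

/-- P and the Goryachev matrix Π′ are compatible: every complex linear
combination λP + μΠ′ satisfies the Jacobi condition on 0 < u < 1. -/
theorem GorP_compatible (a : ℝ) (lam mu : ℂ) (z : Fin 4 → ℝ)
    (h0 : 0 < z 0) (h1 : z 0 < 1) :
    ∀ i j k : Fin 4,
      ∑ l : Fin 4,
        ((lam • canPC + mu • GorP a z) l i
            * pdC l (fun w => (lam • canPC + mu • GorP a w) j k) z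
          + (lam • canPC + mu • GorP a z) l j
            * pdC l (fun w => (lam • canPC + mu • GorP a w) k i) z
          + (lam • canPC + mu • GorP a z) l k
            * pdC l (fun w => (lam • canPC + mu • GorP a w) i j) z) = 0 := by
  have hc := goryachevCoeffs_compatibleAt a h0 h1
  intro i j k
  rw [GorP_eq_bivector]
  refine (halfSchouten_pencil _ canPC z lam mu i j k).trans ?_
  rw [hc.halfSchouten_canPC_bivector, hc.halfSchouten_bivector_self]
  simp
end

section
/- Let a, b ∈ ℝ. On U = {(u,φ,p_u,p_φ) ∈ ℝ⁴ : 0 < u < 1}, with x₁ = √(1−u²)sin φ, x₂ = √(1−u²)cos φ, x₃ = u, J₁ = (u/√(1−u²))sin φ·p_φ + √(1−u²)cos φ·p_u, J₂ = (u/√(1−u²))cos φ·p_φ − √(1−u²)sin φ·p_u, J₃ = −p_φ, define H₁ = J₁² + J₂² + (4/3)J₃² + a·x₁/x₃^{2/3} + b/x₃^{2/3}, H₂ = −(2/3)J₃(J₁² + J₂² + (8/9)J₃² + b/x₃^{2/3}) + a·x₃^{1/3}J₁ − 2a·x₁J₃/(3x₃^{2/3}), and the 2×2 control matrix F with entries F₁₁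 = −x₃^{1/3}(J₁+iJ₂)/(x₁+ix₂) + 2J₃/(3x₃^{2/3}), F₁₂ = 1/x₃^{2/3}, F₂₁ = −a·x₃^{2/3}/(2(x₁+ix₂)) + 2x₃^{1/3}(J₁+iJ₂)J₃/(3(x₁+ix₂)) − 4J₃²/(9x₃^{2/3}), F₂₂ = −2J₃/(3x₃^{2/3}). Let P be the canonical matrix (P₁₃ = P₂₄ = 1, P₃₁ = P₄₂ = −1, else 0) and Π′ the Goryachev second Poisson matrix with upper entries Π′₁₂ = u^{1/3}, Π′₁₃ = i·u^{1/3}p_u − u^{4/3}p_φ/(1−u²), Π′₁₄ = 0, Π′₂₃ = (1−4u²)p_u/(3u^{2/3}(1−u²)) + i·u^{1/3}(4−u²)p_φ/(3(1−u²)²), Π′₂₄ = 0, Π′₃₄ = i·a·e^{iφ}/(2u^{1/3}√(1−u²)). Then for i = 1, 2 the vector identity Π′·∇H_i = P·(F_{i1}∇H₁ + F_{i2}∇H₂) holds on U, where ∇ denotes the gradient with respect to (u,φ,p_u,p_φ). -/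
open Complex

/-- Partial derivative of a real-valued function on ℝ⁴. -/
noncomputable def pd4 (i : Fin 4) (f : (Fin 4 → ℝ) → ℝ) (z : Fin 4 → ℝ) : ℝ :=
  fderiv ℝ f z (Pi.single i 1)

/-- x₁ = √(1−u²) sin φ, x₂ = √(1−u²) cos φ, x₃ = u. -/
noncomputable def sphX : Fin 3 → (Fin 4 → ℝ) → ℝ
  | 0 => fun z => Real.sqrt (1 - (z 0) ^ 2) * Real.sin (z 1)
  | 1 => fun z => Real.sqrt (1 - (z 0) ^ 2) * Real.cos (z 1)
  | 2 => fun z => z 0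

/-- J₁, J₂, J₃ on T*S² in coordinates (u, φ, p_u, p_φ). -/
noncomputable def sphJ : Fin 3 → (Fin 4 → ℝ) → ℝ
  | 0 => fun z => z 0 / Real.sqrt (1 - (z 0) ^ 2) * Real.sin (z 1) * z 3
      + Real.sqrt (1 - (z 0) ^ 2) * Real.cos (z 1) * z 2
  | 1 => fun z => z 0 / Real.sqrt (1 - (z 0) ^ 2) * Real.cos (z 1) * z 3
      - Real.sqrt (1 - (z 0) ^ 2) * Real.sin (z 1) * z 2
  | 2 => fun z => -z 3

/-- The quadratic integral H₁ of the Goryachev system on T*S². -/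
noncomputable def H1Gor (a b : ℝ) (z : Fin 4 → ℝ) : ℝ :=
  (sphJ 0 z) ^ 2 + (sphJ 1 z) ^ 2 + (4 / 3) * (sphJ 2 z) ^ 2
    + a * sphX 0 z / (sphX 2 z) ^ ((2 : ℝ) / 3) + b / (sphX 2 z) ^ ((2 : ℝ) / 3)

/-- The cubic integral H₂ of the Goryachev system on T*S². -/
noncomputable def H2Gor (a b : ℝ) (z : Fin 4 → ℝ) : ℝ :=
  -(2 / 3) * sphJ 2 z * ((sphJ 0 z) ^ 2 + (sphJ 1 z) ^ 2 + (8 / 9) * (sphJ 2 z) ^ 2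
      + b / (sphX 2 z) ^ ((2 : ℝ) / 3))
    + a * (sphX 2 z) ^ ((1 : ℝ) / 3) * sphJ 0 z
    - 2 * a * sphX 0 z * sphJ 2 z / (3 * (sphX 2 z) ^ ((2 : ℝ) / 3))

/-- Entry F₁₁ of the control matrix of the Goryachev system. -/
noncomputable def F11 (z : Fin 4 → ℝ) : ℂ :=
  -(((sphX 2 z ^ ((1 : ℝ) / 3) : ℝ) : ℂ))
      * ((sphJ 0 z : ℂ) + Complex.I * (sphJ 1 z : ℂ))
      / ((sphX 0 z : ℂ) + Complex.I * (sphX 1 z : ℂ))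
    + 2 * (sphJ 2 z : ℂ) / (3 * ((sphX 2 z ^ ((2 : ℝ) / 3) : ℝ) : ℂ))

/-- Entry F₁₂ of the control matrix of the Goryachev system. -/
noncomputable def F12 (z : Fin 4 → ℝ) : ℂ :=
  1 / ((sphX 2 z ^ ((2 : ℝ) / 3) : ℝ) : ℂ)

/-- Entry F₂₁ of the control matrix of the Goryachev system. -/
noncomputable def F21 (a : ℝ) (z : Fin 4 → ℝ) : ℂ :=
  -(a : ℂ) * ((sphX 2 z ^ ((2 : ℝ) / 3) : ℝ) : ℂ)
      / (2 * ((sphX 0 z : ℂ) + Complex.I * (sphX 1 z : ℂ)))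
    + 2 * ((sphX 2 z ^ ((1 : ℝ) / 3) : ℝ) : ℂ)
      * ((sphJ 0 z : ℂ) + Complex.I * (sphJ 1 z : ℂ)) * (sphJ 2 z : ℂ)
      / (3 * ((sphX 0 z : ℂ) + Complex.I * (sphX 1 z : ℂ)))
    - 4 * (sphJ 2 z : ℂ) ^ 2 / (9 * ((sphX 2 z ^ ((2 : ℝ) / 3) : ℝ) : ℂ))

/-- Entry F₂₂ of the control matrix of the Goryachev system. -/
noncomputable def F22 (z : Fin 4 → ℝ) : ℂ :=
  -2 * (sphJ 2 z : ℂ) / (3 * ((sphX 2 z ^ ((2 : ℝ) / 3) : ℝ) : ℂ))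

/-!
Write `N = P⁻¹ Π′` for the recursion operator. As `P` and `Π′` are skew-symmetric of size four,
`N` is annihilated by a quadratic polynomial `X² - c X + d`, where `d` is the ratio of the
Pfaffians. Hence one relation `N v = F₁₁ v + F₁₂ w` with `F₁₂ ≠ 0` determines `N w`, and the second
row of the control identity follows from the first as soon as `tr F = c` and `det F = d`.

For the first row, `H₂ - (2/3) p_φ H₁ = a u^{1/3} J₁ - (8/27) p_φ³`, so that `∇H₂` is
`(2/3) p_φ ∇H₁` plus a vector to which the kinetic energy contributes only in the `p_φ`-component.
Moreover `(J₁ + i J₂) / (x₁ + i x₂) = u p_φ / (1 - u²) - i p_u`, because both `J₁ + i J₂` and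
`x₁ + i x₂` are multiples of `sin φ + i cos φ`; up to the factor `-u^{1/3}` this is the entry
`Π′₁₃`.
-/

open Matrix

section LinearAlgebra

lemma mulVec_eq_of_mul_mul_eq_trace_smul_sub_det_smul {K n : Type*} [Field K] [Fintype n]
    [DecidableEq n] {P P' Q : Matrix n n K} {F : Matrix (Fin 2) (Fin 2) K} {v w : n → K}
    (hP : P' * P = 1) (hQ : Q * P' * Q = F.trace • Q - F.det • P) (hF : F 0 1 ≠ 0)
    (hv : Q *ᵥ v = P *ᵥ (F 0 0 • v + F 0 1 • w)) :
    Q *ᵥ w = P *ᵥ (F 1 0 • v + F 1 1 • w) := by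
  have hN : (P' * Q) *ᵥ v = F 0 0 • v + F 0 1 • w := by
    rw [← mulVec_mulVec, hv, mulVec_mulVec, hP, one_mulVec]
  have hw : F 0 1 • w = (P' * Q) *ᵥ v - F 0 0 • v := by
    rw [hN, add_sub_cancel_left]
  refine smul_right_injective (n → K) hF ?_
  calc F 0 1 • Q *ᵥ w = (Q * P' * Q) *ᵥ v - F 0 0 • Q *ᵥ v := by
        rw [← mulVec_smul, hw, mulVec_sub, mulVec_smul, mulVec_mulVec, Matrix.mul_assoc]
    _ = F 1 1 • Q *ᵥ v - F.det • P *ᵥ v := by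
        rw [hQ, sub_mulVec, smul_mulVec, smul_mulVec, trace_fin_two]
        module
    _ = F 0 1 • P *ᵥ (F 1 0 • v + F 1 1 • w) := by
        rw [hv, det_fin_two]
        simp only [mulVec_add, mulVec_smul]
        module

lemma neg_canPC_mul_canPC : -canPC * canPC = 1 := by
  ext i j
  fin_cases i <;> fin_cases j <;> simp [canPC, Matrix.mul_apply, Fin.sum_univ_four]

lemma mul_neg_canPC_mul_of_transpose_eq_neg {A : Matrix (Fin 4) (Fin 4) ℂ} (hA : Aᵀ = -A) :
    A * -canPC * A
      = (A 0 2 + A 1 3) • A + (A 0 1 * A 2 3 - A 0 2 * A 1 3 + A 0 3 * A 1 2) • canPC := by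
  have hskew (i j : Fin 4) : A i j = -A j i := congrFun₂ hA j i
  have hdiag (i : Fin 4) : A i i = 0 := self_eq_neg.mp (hskew i i)
  ext i j
  fin_cases i <;> fin_cases j <;>
    simp [canPC, Matrix.mul_apply, Fin.sum_univ_four, hdiag, hskew 1 0, hskew 2 0, hskew 3 0,
      hskew 2 1, hskew 3 1, hskew 3 2] <;>
    ring

end LinearAlgebra

section CoordGradient

variable {𝕜 ι : Type*} [NontriviallyNormedField 𝕜] [Fintype ι] {f₁ f₂ : (ι → 𝕜) → 𝕜}
  {g₁ g₂ z : ι → 𝕜}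

/-- `f` is differentiable at `z` with vector of partial derivatives `g`. This replaces
`HasGradientAt`, which is not available on `ι → 𝕜` since the sup norm is not Euclidean. -/
def HasCoordGradAt (f : (ι → 𝕜) → 𝕜) (g z : ι → 𝕜) : Prop :=
  HasFDerivAt f (∑ i, g i • (ContinuousLinearMap.proj i : (ι → 𝕜) →L[𝕜] 𝕜)) z

namespace HasCoordGradAt

lemma congr_grad (h₁ : HasCoordGradAt f₁ g₁ z) (hg : ∀ i, g₁ i = g₂ i) :
    HasCoordGradAt f₁ g₂ z :=
  funext hg ▸ h₁

lemma coord [DecidableEq ι] (i : ι) (z : ι → 𝕜) :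
    HasCoordGradAt (fun y => y i) (Pi.single i 1) z :=
  (hasFDerivAt_apply i z).congr_fderiv <| by
    ext v
    simp [Pi.single_apply, -ite_smul]

lemma add (h₁ : HasCoordGradAt f₁ g₁ z) (h₂ : HasCoordGradAt f₂ g₂ z) :
    HasCoordGradAt (fun y => f₁ y + f₂ y) (g₁ + g₂) z :=
  (HasFDerivAt.add h₁ h₂).congr_fderiv <| by
    ext v
    simp [add_mul, Finset.sum_add_distrib]

lemma mul (h₁ : HasCoordGradAt f₁ g₁ z) (h₂ : HasCoordGradAt f₂ g₂ z) :
    HasCoordGradAt (fun y => f₁ y * f₂ y) (f₁ z • g₂ + f₂ z • g₁) z :=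
  (HasFDerivAt.mul h₁ h₂).congr_fderiv <| by
    ext v
    simp [add_mul, mul_assoc, Finset.sum_add_distrib, Finset.mul_sum]

lemma comp {φ : 𝕜 → 𝕜} {φ' : 𝕜} (hφ : HasDerivAt φ φ' (f₁ z)) (h₁ : HasCoordGradAt f₁ g₁ z) :
    HasCoordGradAt (fun y => φ (f₁ y)) (φ' • g₁) z :=
  (hφ.comp_hasFDerivAt z h₁).congr_fderiv <| by simp [Finset.smul_sum, smul_smul]

lemma const_mul (c : 𝕜) (h₁ : HasCoordGradAt f₁ g₁ z) :
    HasCoordGradAt (fun y => c * f₁ y) (c • g₁) z :=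
  comp ((hasDerivAt_id _).const_mul c |>.congr_deriv (mul_one c)) h₁

lemma pow (h₁ : HasCoordGradAt f₁ g₁ z) (n : ℕ) :
    HasCoordGradAt (fun y => f₁ y ^ n) ((n * f₁ z ^ (n - 1)) • g₁) z :=
  comp (hasDerivAt_pow n _) h₁

end HasCoordGradAt

lemma HasCoordGradAt.pd4_eq {f : (Fin 4 → ℝ) → ℝ} {g z : Fin 4 → ℝ} (h : HasCoordGradAt f g z)
    (i : Fin 4) : pd4 i f z = g i := by
  simp [pd4, HasFDerivAt.fderiv h, Pi.single_apply]

end CoordGradient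

section Sphere

/-- The cube root `u^{1/3}` of the height, in terms of which all powers of `u` are expressed. -/
noncomputable def cbrtHeight (z : Fin 4 → ℝ) : ℝ := z 0 ^ ((1 : ℝ) / 3)

/-- The radius `√(1 - u²)` of the circle of latitude at height `u`. -/
noncomputable def latRadius (z : Fin 4 → ℝ) : ℝ := √(1 - z 0 ^ 2)

/-- The component of `(J₁, J₂)` along `(sin φ, cos φ)`, the direction of `(x₁, x₂)`. -/
noncomputable def radialJ (z : Fin 4 → ℝ) : ℝ := z 0 / latRadius z * z 3

/-- The component of `(J₁, J₂)` along `(cos φ, -sin φ)`. -/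
noncomputable def tangentialJ (z : Fin 4 → ℝ) : ℝ := latRadius z * z 2

/-- The `a`- and `b`-dependent part of `H₁`. -/
noncomputable def potential (a b : ℝ) (z : Fin 4 → ℝ) : ℝ :=
  (a * sphX 0 z + b) / z 0 ^ ((2 : ℝ) / 3)

variable (a b : ℝ) {z : Fin 4 → ℝ}

lemma sphX_zero_eq (z : Fin 4 → ℝ) : sphX 0 z = latRadius z * Real.sin (z 1) := rfl

lemma sphX_one_eq (z : Fin 4 → ℝ) : sphX 1 z = latRadius z * Real.cos (z 1) := rfl

lemma sphJ_zero_eq (z : Fin 4 → ℝ) :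
    sphJ 0 z = radialJ z * Real.sin (z 1) + tangentialJ z * Real.cos (z 1) := by
  simp only [sphJ, radialJ, tangentialJ, latRadius]
  ring

lemma sphJ_one_eq (z : Fin 4 → ℝ) :
    sphJ 1 z = radialJ z * Real.cos (z 1) - tangentialJ z * Real.sin (z 1) := by
  simp only [sphJ, radialJ, tangentialJ, latRadius]
  ring

lemma sphJ_sq_add_sq (z : Fin 4 → ℝ) :
    sphJ 0 z ^ 2 + sphJ 1 z ^ 2 = radialJ z ^ 2 + tangentialJ z ^ 2 := by
  rw [sphJ_zero_eq, sphJ_one_eq]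
  linear_combination (radialJ z ^ 2 + tangentialJ z ^ 2) * Real.sin_sq_add_cos_sq (z 1)

lemma H1Gor_eq (z : Fin 4 → ℝ) :
    H1Gor a b z = radialJ z ^ 2 + tangentialJ z ^ 2 + 4 / 3 * z 3 ^ 2 + potential a b z := by
  rw [H1Gor, sphJ_sq_add_sq]
  simp only [sphJ, potential, show sphX 2 z = z 0 from rfl]
  ring

lemma H2Gor_eq (z : Fin 4 → ℝ) :
    H2Gor a b z = 2 / 3 * (z 3 * H1Gor a b z)
      + (a * (cbrtHeight z * sphJ 0 z) + -(8 / 27) * z 3 ^ 3) := by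
  simp only [H1Gor, H2Gor, cbrtHeight, show sphX 2 z = z 0 from rfl,
    show sphJ 2 z = -z 3 from rfl]
  ring

lemma rpow_two_thirds_eq (hu : 0 < z 0) : z 0 ^ ((2 : ℝ) / 3) = cbrtHeight z ^ 2 := by
  rw [cbrtHeight, ← Real.rpow_mul_natCast hu.le]
  norm_num

lemma rpow_four_thirds_eq (hu : 0 < z 0) : z 0 ^ ((4 : ℝ) / 3) = cbrtHeight z ^ 4 := by
  rw [cbrtHeight, ← Real.rpow_mul_natCast hu.le]
  norm_num

lemma cbrtHeight_pow_three (hu : 0 < z 0) : cbrtHeight z ^ 3 = z 0 := by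
  rw [cbrtHeight, ← Real.rpow_mul_natCast hu.le]
  norm_num

lemma cbrtHeight_pos (hu : 0 < z 0) : 0 < cbrtHeight z := Real.rpow_pos_of_pos hu _

lemma ofReal_cbrtHeight_ne_zero (hu : 0 < z 0) : (cbrtHeight z : ℂ) ≠ 0 :=
  ofReal_ne_zero.mpr (cbrtHeight_pos hu).ne'

lemma latRadius_pos (h0 : 0 < z 0) (h1 : z 0 < 1) : 0 < latRadius z :=
  Real.sqrt_pos.mpr (by nlinarith)

lemma ofReal_latRadius_ne_zero (h0 : 0 < z 0) (h1 : z 0 < 1) : (latRadius z : ℂ) ≠ 0 :=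
  ofReal_ne_zero.mpr (latRadius_pos h0 h1).ne'

lemma latRadius_sq (h0 : 0 < z 0) (h1 : z 0 < 1) : latRadius z ^ 2 = 1 - z 0 ^ 2 :=
  Real.sq_sqrt (by nlinarith)

end Sphere

section Gradients

variable (a b : ℝ) {z : Fin 4 → ℝ}

lemma hasCoordGradAt_cbrtHeight (hu : 0 < z 0) :
    HasCoordGradAt cbrtHeight ![1 / (3 * cbrtHeight z ^ 2), 0, 0, 0] z := by
  have hpow : z 0 ^ ((1 : ℝ) / 3 - 1) = (cbrtHeight z ^ 2)⁻¹ := by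
    rw [← rpow_two_thirds_eq hu, ← Real.rpow_neg hu.le]
    norm_num
  refine ((HasCoordGradAt.coord 0 z).comp
    (Real.hasDerivAt_rpow_const (p := (1 : ℝ) / 3) (Or.inl hu.ne'))).congr_grad fun i => ?_
  rw [hpow]
  fin_cases i <;> simp [mul_comm]

lemma hasCoordGradAt_latRadius (h0 : 0 < z 0) (h1 : z 0 < 1) :
    HasCoordGradAt latRadius ![-z 0 / latRadius z, 0, 0, 0] z := by
  have hr : 1 - z 0 ^ 2 ≠ 0 := by nlinarith
  refine ((HasCoordGradAt.coord 0 z).comp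
    (((hasDerivAt_pow 2 (z 0)).const_sub 1).sqrt hr)).congr_grad fun i => ?_
  fin_cases i <;> simp [latRadius]
  field_simp

lemma hasCoordGradAt_radialJ (h0 : 0 < z 0) (h1 : z 0 < 1) :
    HasCoordGradAt radialJ ![z 3 / latRadius z ^ 3, 0, 0, z 0 / latRadius z] z := by
  have hr := (latRadius_pos h0 h1).ne'
  refine (((HasCoordGradAt.coord 0 z).mul ((hasCoordGradAt_latRadius h0 h1).comp
    (hasDerivAt_inv hr))).mul (HasCoordGradAt.coord 3 z)).congr_grad fun i => ?_
  fin_cases i <;> simp [vecHead, vecTail] <;> field_simp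
  linear_combination z 3 * latRadius_sq h0 h1

lemma hasCoordGradAt_tangentialJ (h0 : 0 < z 0) (h1 : z 0 < 1) :
    HasCoordGradAt tangentialJ ![-z 0 * z 2 / latRadius z, 0, latRadius z, 0] z := by
  refine ((hasCoordGradAt_latRadius h0 h1).mul (HasCoordGradAt.coord 2 z)).congr_grad fun i => ?_
  fin_cases i <;> simp
  ring

lemma hasCoordGradAt_sphX_zero (h0 : 0 < z 0) (h1 : z 0 < 1) :
    HasCoordGradAt (sphX 0)
      ![-z 0 * Real.sin (z 1) / latRadius z, latRadius z * Real.cos (z 1), 0, 0] z := by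
  refine ((hasCoordGradAt_latRadius h0 h1).mul
    ((HasCoordGradAt.coord 1 z).comp (Real.hasDerivAt_sin _))).congr_grad fun i => ?_
  fin_cases i <;> simp
  ring

lemma hasCoordGradAt_sphJ_zero (h0 : 0 < z 0) (h1 : z 0 < 1) :
    HasCoordGradAt (sphJ 0)
      ![z 3 / latRadius z ^ 3 * Real.sin (z 1) - z 0 * z 2 / latRadius z * Real.cos (z 1),
        sphJ 1 z, latRadius z * Real.cos (z 1), z 0 / latRadius z * Real.sin (z 1)] z := by
  rw [funext sphJ_zero_eq, sphJ_one_eq]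
  refine (((hasCoordGradAt_radialJ h0 h1).mul
    ((HasCoordGradAt.coord 1 z).comp (Real.hasDerivAt_sin _))).add
    ((hasCoordGradAt_tangentialJ h0 h1).mul
      ((HasCoordGradAt.coord 1 z).comp (Real.hasDerivAt_cos _)))).congr_grad fun i => ?_
  fin_cases i <;> simp [vecHead, vecTail] <;> ring

lemma hasCoordGradAt_potential (h0 : 0 < z 0) (h1 : z 0 < 1) :
    HasCoordGradAt (potential a b)
      ![-a * z 0 * Real.sin (z 1) / (latRadius z * cbrtHeight z ^ 2)
          - 2 * (a * sphX 0 z + b) / (3 * cbrtHeight z ^ 5),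
        a * latRadius z * Real.cos (z 1) / cbrtHeight z ^ 2, 0, 0] z := by
  have hr := (latRadius_pos h0 h1).ne'
  have ht := (cbrtHeight_pos h0).ne'
  have hpow : z 0 ^ ((2 : ℝ) / 3 - 1) = (cbrtHeight z)⁻¹ := by
    rw [cbrtHeight, ← Real.rpow_neg h0.le]
    norm_num
  have hnum : HasCoordGradAt (fun y => a * sphX 0 y + b) (a • _) z :=
    (hasCoordGradAt_sphX_zero h0 h1).comp ((hasDerivAt_const_mul a).add_const b)
  have hden : HasCoordGradAt (fun y => (y 0 ^ ((2 : ℝ) / 3))⁻¹)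
      ![-2 / (3 * cbrtHeight z ^ 5), 0, 0, 0] z := by
    refine ((HasCoordGradAt.coord 0 z).comp
      ((Real.hasDerivAt_rpow_const (p := (2 : ℝ) / 3) (Or.inl h0.ne')).inv
        (Real.rpow_pos_of_pos h0 _).ne')).congr_grad fun i => ?_
    rw [hpow, rpow_two_thirds_eq h0]
    fin_cases i <;> simp
    field_simp
  rw [show potential a b = _ from funext fun y => div_eq_mul_inv _ _]
  refine (hnum.mul hden).congr_grad fun i => ?_
  rw [rpow_two_thirds_eq h0]
  fin_cases i <;> simp <;> field_simp
  ring

/-- The components of `∇H₁`. -/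
noncomputable def gradH1Gor (z : Fin 4 → ℝ) : Fin 4 → ℝ :=
  ![2 * z 0 * z 3 ^ 2 / latRadius z ^ 4 - 2 * z 0 * z 2 ^ 2
      - a * z 0 * Real.sin (z 1) / (latRadius z * cbrtHeight z ^ 2)
      - 2 * (a * sphX 0 z + b) / (3 * cbrtHeight z ^ 5),
    a * latRadius z * Real.cos (z 1) / cbrtHeight z ^ 2,
    2 * latRadius z ^ 2 * z 2,
    2 * z 0 ^ 2 * z 3 / latRadius z ^ 2 + 8 / 3 * z 3]

/-- The components of `∇H₂ - (2/3) p_φ ∇H₁`. -/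
noncomputable def gradDefect (z : Fin 4 → ℝ) : Fin 4 → ℝ :=
  ![a * (sphJ 0 z / (3 * cbrtHeight z ^ 2) + cbrtHeight z
      * (z 3 * Real.sin (z 1) / latRadius z ^ 3 - z 0 * z 2 * Real.cos (z 1) / latRadius z)),
    a * cbrtHeight z * sphJ 1 z,
    a * cbrtHeight z * latRadius z * Real.cos (z 1),
    2 / 3 * (radialJ z ^ 2 + tangentialJ z ^ 2 + (a * sphX 0 z + b) / cbrtHeight z ^ 2)
      + a * cbrtHeight z * z 0 * Real.sin (z 1) / latRadius z]

lemma hasCoordGradAt_H1Gor (h0 : 0 < z 0) (h1 : z 0 < 1) :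
    HasCoordGradAt (H1Gor a b) (gradH1Gor a b z) z := by
  have hr := (latRadius_pos h0 h1).ne'
  have ht := (cbrtHeight_pos h0).ne'
  rw [funext (H1Gor_eq a b)]
  refine (((((hasCoordGradAt_radialJ h0 h1).pow 2).add
    ((hasCoordGradAt_tangentialJ h0 h1).pow 2)).add
    (((HasCoordGradAt.coord 3 z).pow 2).const_mul (4 / 3))).add
    (hasCoordGradAt_potential a b h0 h1)).congr_grad fun i => ?_
  fin_cases i <;> simp [vecHead, vecTail, gradH1Gor, radialJ, tangentialJ] <;> field_simp <;> ring

lemma hasCoordGradAt_H2Gor (h0 : 0 < z 0) (h1 : z 0 < 1) :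
    HasCoordGradAt (H2Gor a b) ((2 / 3 * z 3) • gradH1Gor a b z + gradDefect a b z) z := by
  have hr := (latRadius_pos h0 h1).ne'
  have ht := (cbrtHeight_pos h0).ne'
  rw [funext (H2Gor_eq a b)]
  refine ((((HasCoordGradAt.coord 3 z).mul (hasCoordGradAt_H1Gor a b h0 h1)).const_mul (2 / 3)).add
    ((((hasCoordGradAt_cbrtHeight h0).mul (hasCoordGradAt_sphJ_zero h0 h1)).const_mul a).add
    (((HasCoordGradAt.coord 3 z).pow 3).const_mul (-(8 / 27))))).congr_grad fun i => ?_
  fin_cases i <;>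
    simp [vecHead, vecTail, gradDefect, H1Gor_eq, potential, rpow_two_thirds_eq h0] <;>
    field_simp <;> ring

end Gradients

section ControlMatrix

variable (a b : ℝ) {z : Fin 4 → ℝ}

lemma sin_add_I_mul_cos_mul_sin_sub_I_mul_cos (x : ℂ) :
    (sin x + I * cos x) * (sin x - I * cos x) = 1 := by
  linear_combination sin_sq_add_cos_sq x - cos x ^ 2 * I_sq

lemma sphX_zero_add_I_mul_sphX_one (z : Fin 4 → ℝ) :
    (sphX 0 z : ℂ) + I * sphX 1 z = latRadius z * (sin (z 1) + I * cos (z 1)) := by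
  rw [sphX_zero_eq, sphX_one_eq]
  push_cast
  ring

lemma sphJ_zero_add_I_mul_sphJ_one (z : Fin 4 → ℝ) :
    (sphJ 0 z : ℂ) + I * sphJ 1 z
      = (radialJ z - I * tangentialJ z) * (sin (z 1) + I * cos (z 1)) := by
  rw [sphJ_zero_eq, sphJ_one_eq]
  push_cast
  linear_combination (tangentialJ z * cos (z 1) : ℂ) * I_sq

lemma inv_sphX_zero_add_I_mul_sphX_one (z : Fin 4 → ℝ) :
    ((sphX 0 z : ℂ) + I * sphX 1 z)⁻¹ = (sin (z 1) - I * cos (z 1)) / latRadius z := by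
  rw [sphX_zero_add_I_mul_sphX_one, mul_inv,
    inv_eq_of_mul_eq_one_right (sin_add_I_mul_cos_mul_sin_sub_I_mul_cos _), inv_mul_eq_div]

lemma sphJ_div_sphX (h0 : 0 < z 0) (h1 : z 0 < 1) :
    ((sphJ 0 z : ℂ) + I * sphJ 1 z) / (sphX 0 z + I * sphX 1 z)
      = z 0 * z 3 / latRadius z ^ 2 - I * z 2 := by
  have hr := ofReal_latRadius_ne_zero h0 h1
  rw [sphJ_zero_add_I_mul_sphJ_one, sphX_zero_add_I_mul_sphX_one, mul_div_mul_right _ _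
    (left_ne_zero_of_mul_eq_one (sin_add_I_mul_cos_mul_sin_sub_I_mul_cos _))]
  simp only [radialJ, tangentialJ]
  push_cast
  field_simp

lemma GorP_zero_one (z : Fin 4 → ℝ) : GorP a z 0 1 = cbrtHeight z := rfl

lemma GorP_zero_two (h0 : 0 < z 0) (h1 : z 0 < 1) :
    GorP a z 0 2 = -cbrtHeight z * (z 0 * z 3 / latRadius z ^ 2 - I * z 2) := by
  have hdef : GorP a z 0 2 = I * (cbrtHeight z * z 2 : ℝ)
      - (z 0 ^ ((4 : ℝ) / 3) * z 3 / (1 - z 0 ^ 2) : ℝ) := rfl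
  rw [hdef, rpow_four_thirds_eq h0, ← latRadius_sq h0 h1, ← cbrtHeight_pow_three h0]
  push_cast
  ring

lemma GorP_one_two (h0 : 0 < z 0) (h1 : z 0 < 1) :
    GorP a z 1 2 = (1 - 4 * z 0 ^ 2) * z 2 / (3 * cbrtHeight z ^ 2 * latRadius z ^ 2)
      + I * (cbrtHeight z * (4 - z 0 ^ 2) * z 3 / (3 * latRadius z ^ 4)) := by
  have hdef : GorP a z 1 2
      = ((1 - 4 * z 0 ^ 2) * z 2 / (3 * z 0 ^ ((2 : ℝ) / 3) * (1 - z 0 ^ 2)) : ℝ)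
        + I * (cbrtHeight z * (4 - z 0 ^ 2) * z 3 / (3 * (1 - z 0 ^ 2) ^ 2) : ℝ) := rfl
  rw [hdef, rpow_two_thirds_eq h0, ← latRadius_sq h0 h1]
  push_cast
  ring

lemma GorP_two_three (z : Fin 4 → ℝ) :
    GorP a z 2 3
      = I * a * (cos (z 1) + I * sin (z 1)) / (2 * cbrtHeight z * latRadius z) := by
  have hdef : GorP a z 2 3
      = I * a * exp (I * z 1) / (2 * cbrtHeight z * latRadius z : ℝ) := rfl
  rw [hdef, mul_comm I (z 1 : ℂ), exp_mul_I, mul_comm (sin _) I]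
  push_cast
  rfl

lemma transpose_GorP (z : Fin 4 → ℝ) : (GorP a z)ᵀ = -GorP a z := by
  ext i j
  fin_cases i <;> fin_cases j <;> simp [GorP]

lemma F12_eq (h0 : 0 < z 0) : F12 z = 1 / (cbrtHeight z : ℂ) ^ 2 := by
  simp only [F12, show sphX 2 z = z 0 from rfl, rpow_two_thirds_eq h0, ofReal_pow]

lemma F22_eq (z : Fin 4 → ℝ) : F22 z = 2 / 3 * z 3 * F12 z := by
  simp only [F22, F12, show sphJ 2 z = -z 3 from rfl, ofReal_neg]
  ring

lemma F11_eq (h0 : 0 < z 0) (h1 : z 0 < 1) :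
    F11 z = GorP a z 0 2 - 2 / 3 * z 3 * F12 z := by
  rw [GorP_zero_two a h0 h1, ← sphJ_div_sphX h0 h1]
  simp only [F11, F12, cbrtHeight, show sphX 2 z = z 0 from rfl, show sphJ 2 z = -z 3 from rfl,
    ofReal_neg]
  ring

lemma F21_eq (h0 : 0 < z 0) :
    F21 a z = 2 / 3 * z 3 * F11 z
      - a * cbrtHeight z ^ 2 / 2 * ((sphX 0 z : ℂ) + I * sphX 1 z)⁻¹ := by
  simp only [F21, F11, show sphX 2 z = z 0 from rfl, show sphJ 2 z = -z 3 from rfl,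
    rpow_two_thirds_eq h0, ofReal_neg, ofReal_pow]
  generalize (sphX 0 z : ℂ) + I * sphX 1 z = x
  ring

/-- The control matrix of the Goryachev system. -/
noncomputable def controlMatrix (z : Fin 4 → ℝ) : Matrix (Fin 2) (Fin 2) ℂ :=
  !![F11 z, F12 z; F21 a z, F22 z]

lemma trace_controlMatrix (h0 : 0 < z 0) (h1 : z 0 < 1) :
    (controlMatrix a z).trace = GorP a z 0 2 + GorP a z 1 3 := by
  have h13 : GorP a z 1 3 = 0 := rfl
  rw [controlMatrix, trace_fin_two_of, F11_eq a h0 h1, F22_eq, h13]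
  ring

lemma det_controlMatrix (h0 : 0 < z 0) (h1 : z 0 < 1) :
    (controlMatrix a z).det
      = -(GorP a z 0 1 * GorP a z 2 3 - GorP a z 0 2 * GorP a z 1 3
        + GorP a z 0 3 * GorP a z 1 2) := by
  have h03 : GorP a z 0 3 = 0 := rfl
  have h13 : GorP a z 1 3 = 0 := rfl
  have hr := ofReal_latRadius_ne_zero h0 h1
  have ht := ofReal_cbrtHeight_ne_zero h0
  rw [controlMatrix, det_fin_two_of, F21_eq a h0, F22_eq, F12_eq h0,
    inv_sphX_zero_add_I_mul_sphX_one, GorP_zero_one, GorP_two_three, h03, h13]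
  field_simp
  linear_combination (3 * a * cbrtHeight z ^ 2 * sin (z 1) : ℂ) * I_sq

lemma GorP_mul_neg_canPC_mul_GorP (h0 : 0 < z 0) (h1 : z 0 < 1) :
    GorP a z * -canPC * GorP a z
      = (controlMatrix a z).trace • GorP a z - (controlMatrix a z).det • canPC := by
  rw [mul_neg_canPC_mul_of_transpose_eq_neg (transpose_GorP a z), trace_controlMatrix a h0 h1,
    det_controlMatrix a h0 h1, neg_smul, sub_neg_eq_add]

lemma canPC_mulVec (v : Fin 4 → ℂ) : canPC *ᵥ v = ![v 2, v 3, -v 0, -v 1] := by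
  ext i
  fin_cases i <;> simp [canPC, mulVec, dotProduct, Fin.sum_univ_four]

lemma GorP_mulVec (z : Fin 4 → ℝ) (v : Fin 4 → ℂ) :
    GorP a z *ᵥ v
      = ![GorP a z 0 1 * v 1 + GorP a z 0 2 * v 2, -GorP a z 0 1 * v 0 + GorP a z 1 2 * v 2,
          -GorP a z 0 2 * v 0 - GorP a z 1 2 * v 1 + GorP a z 2 3 * v 3,
          -GorP a z 2 3 * v 2] := by
  ext i
  fin_cases i <;> simp [GorP, mulVec, dotProduct, Fin.sum_univ_four]
  ring

lemma GorP_zero_one_mul_gradH1Gor (h0 : 0 < z 0) :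
    GorP a z 0 1 * gradH1Gor a b z 1 = F12 z * gradDefect a b z 2 := by
  have ht := ofReal_cbrtHeight_ne_zero h0
  rw [GorP_zero_one, F12_eq h0]
  simp only [gradH1Gor, gradDefect, cons_val]
  push_cast
  field_simp

lemma GorP_two_three_mul_gradH1Gor (h0 : 0 < z 0) (h1 : z 0 < 1) :
    GorP a z 2 3 * gradH1Gor a b z 2
      = GorP a z 0 2 * gradH1Gor a b z 1 + F12 z * gradDefect a b z 1 := by
  have hr := ofReal_latRadius_ne_zero h0 h1
  have ht := ofReal_cbrtHeight_ne_zero h0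
  rw [GorP_two_three, GorP_zero_two a h0 h1, F12_eq h0]
  simp only [gradH1Gor, gradDefect, cons_val, sphJ_one_eq, radialJ, tangentialJ]
  push_cast
  field_simp
  linear_combination (a * latRadius z ^ 2 * z 2 * sin (z 1) : ℂ) * I_sq

lemma GorP_one_two_mul_gradH1Gor_sub (h0 : 0 < z 0) (h1 : z 0 < 1) :
    GorP a z 1 2 * gradH1Gor a b z 2 - GorP a z 0 1 * gradH1Gor a b z 0
      = GorP a z 0 2 * gradH1Gor a b z 3 + F12 z * gradDefect a b z 3 := by
  have hr := ofReal_latRadius_ne_zero h0 h1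
  have ht := ofReal_cbrtHeight_ne_zero h0
  have hr_sq : (latRadius z : ℂ) ^ 2 = 1 - z 0 ^ 2 := mod_cast latRadius_sq h0 h1
  have hu : (z 0 : ℂ) = cbrtHeight z ^ 3 := mod_cast (cbrtHeight_pow_three h0).symm
  rw [GorP_one_two a h0 h1, GorP_zero_one, GorP_zero_two a h0 h1, F12_eq h0]
  simp only [gradH1Gor, gradDefect, cons_val, sphX_zero_eq, radialJ, tangentialJ]
  push_cast
  rw [hu] at hr_sq ⊢
  field_simp
  linear_combination
    (6 * cbrtHeight z ^ 8 * z 3 ^ 2 - 8 * I * latRadius z ^ 2 * cbrtHeight z ^ 5 * z 2 * z 3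
      - 2 * cbrtHeight z ^ 2 * latRadius z ^ 4 * z 2 ^ 2 : ℂ) * hr_sq

lemma GorP_one_two_mul_gradH1Gor_sub_GorP_two_three_mul (h0 : 0 < z 0) (h1 : z 0 < 1) :
    GorP a z 1 2 * gradH1Gor a b z 1 - GorP a z 2 3 * gradH1Gor a b z 3
      = F12 z * gradDefect a b z 0 := by
  have hr := ofReal_latRadius_ne_zero h0 h1
  have ht := ofReal_cbrtHeight_ne_zero h0
  have hr_sq : (latRadius z : ℂ) ^ 2 = 1 - z 0 ^ 2 := mod_cast latRadius_sq h0 h1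
  have hu : (z 0 : ℂ) = cbrtHeight z ^ 3 := mod_cast (cbrtHeight_pow_three h0).symm
  rw [GorP_one_two a h0 h1, GorP_two_three, F12_eq h0]
  simp only [gradH1Gor, gradDefect, cons_val, sphJ_zero_eq, radialJ, tangentialJ]
  push_cast
  rw [hu] at hr_sq ⊢
  field_simp
  linear_combination
    (6 * a * cbrtHeight z ^ 3 * z 3 * sin (z 1) - 8 * I * a * cbrtHeight z ^ 3 * z 3 * cos (z 1)
      - 2 * a * latRadius z ^ 2 * z 2 * cos (z 1) : ℂ) * hr_sq
    - (a * cbrtHeight z ^ 3 * z 3 * sin (z 1)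
      * (6 * cbrtHeight z ^ 6 + 8 * latRadius z ^ 2) : ℂ) * I_sq

lemma GorP_mulVec_gradH1Gor (h0 : 0 < z 0) (h1 : z 0 < 1) :
    GorP a z *ᵥ (ofReal ∘ gradH1Gor a b z)
      = canPC *ᵥ (GorP a z 0 2 • (ofReal ∘ gradH1Gor a b z)
        + F12 z • (ofReal ∘ gradDefect a b z)) := by
  rw [GorP_mulVec, canPC_mulVec]
  congrm ![?_, ?_, ?_, ?_] <;>
    simp only [Pi.add_apply, Pi.smul_apply, smul_eq_mul, Function.comp_apply]
  · linear_combination GorP_zero_one_mul_gradH1Gor a b h0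
  · linear_combination GorP_one_two_mul_gradH1Gor_sub a b h0 h1
  · linear_combination -GorP_one_two_mul_gradH1Gor_sub_GorP_two_three_mul a b h0 h1
  · linear_combination -GorP_two_three_mul_gradH1Gor a b h0 h1

lemma GorP_mulVec_pd4_H1Gor (h0 : 0 < z 0) (h1 : z 0 < 1) :
    GorP a z *ᵥ (fun c => (pd4 c (H1Gor a b) z : ℂ))
      = canPC *ᵥ (F11 z • (fun c => (pd4 c (H1Gor a b) z : ℂ))
        + F12 z • fun c => (pd4 c (H2Gor a b) z : ℂ)) := by
  have hv : (fun c => (pd4 c (H1Gor a b) z : ℂ)) = ofReal ∘ gradH1Gor a b z :=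
    funext fun c => congrArg ofReal ((hasCoordGradAt_H1Gor a b h0 h1).pd4_eq c)
  have hw : (fun c => (pd4 c (H2Gor a b) z : ℂ))
      = (2 / 3 * z 3 : ℂ) • (ofReal ∘ gradH1Gor a b z) + ofReal ∘ gradDefect a b z := by
    ext c
    simp [(hasCoordGradAt_H2Gor a b h0 h1).pd4_eq c]
  rw [hv, hw, GorP_mulVec_gradH1Gor a b h0 h1, F11_eq a h0 h1]
  congr 1
  module

lemma GorP_mulVec_pd4_H2Gor (h0 : 0 < z 0) (h1 : z 0 < 1) :
    GorP a z *ᵥ (fun c => (pd4 c (H2Gor a b) z : ℂ))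
      = canPC *ᵥ (F21 a z • (fun c => (pd4 c (H1Gor a b) z : ℂ))
        + F22 z • fun c => (pd4 c (H2Gor a b) z : ℂ)) := by
  have hF : F12 z ≠ 0 := by
    rw [F12_eq h0]
    exact one_div_ne_zero (pow_ne_zero 2 (ofReal_cbrtHeight_ne_zero h0))
  exact mulVec_eq_of_mul_mul_eq_trace_smul_sub_det_smul (F := controlMatrix a z)
    neg_canPC_mul_canPC (GorP_mul_neg_canPC_mul_GorP a h0 h1) hF (GorP_mulVec_pd4_H1Gor a b h0 h1)

end ControlMatrix

/-- The control-matrix identity Π′·∇H_i = P·(F_{i1}∇H₁ + F_{i2}∇H₂) of the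
Goryachev system holds on 0 < u < 1, for i = 1, 2. -/
theorem Gor_control_matrix (a b : ℝ) (z : Fin 4 → ℝ) (h0 : 0 < z 0) (h1 : z 0 < 1) :
    ∀ r : Fin 4,
      (∑ c : Fin 4, GorP a z r c * (pd4 c (H1Gor a b) z : ℂ))
        = ∑ c : Fin 4, canPC r c
            * (F11 z * (pd4 c (H1Gor a b) z : ℂ) + F12 z * (pd4 c (H2Gor a b) z : ℂ)) ∧
      (∑ c : Fin 4, GorP a z r c * (pd4 c (H2Gor a b) z : ℂ))
        = ∑ c : Fin 4, canPC r c
            * (F21 a z * (pd4 c (H1Gor a b) z : ℂ) + F22 z * (pd4 c (H2Gor a b) z : ℂ)) := by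
  intro r
  exact ⟨congrFun (GorP_mulVec_pd4_H1Gor a b h0 h1) r,
    congrFun (GorP_mulVec_pd4_H2Gor a b h0 h1) r⟩
end
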